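/- Let T be a QMS with a faithful normal invariant state and assume N(T) = ⊕_{i∈I} p_i N(T) p_i with (p_i) mutually orthogonal central minimal projections fixed by T (p_i ∈ F(T)), and F(T) ⊆ N(T). Then for every T-invariant state σ and all i ≠ j one has p_i σ p_j = 0. -/

import Mathlib

open Filter MeasureTheory

/-- Trace of an operator on the finite-dimensional space `ℂ^d`. -/
noncomputable def trE (d : ℕ)
    (a : EuclideanSpace ℂ (Fin d) →L[ℂ] EuclideanSpace ℂ (Fin d)) : ℂ :=
  LinearMap.trace ℂ (EuclideanSpace ℂ (Fin d)) a.toLinearMap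

/-- Complete positivity of a linear map on `B(ℂ^d)`. -/
def IsCompletelyPositiveE (d : ℕ)
    (T : (EuclideanSpace ℂ (Fin d) →L[ℂ] EuclideanSpace ℂ (Fin d)) →ₗ[ℂ]
      (EuclideanSpace ℂ (Fin d) →L[ℂ] EuclideanSpace ℂ (Fin d))) : Prop :=
  ∀ (n : ℕ) (a b : Fin n → (EuclideanSpace ℂ (Fin d) →L[ℂ] EuclideanSpace ℂ (Fin d))),
    (∑ i, ∑ j, star (b i) * T (star (a i) * a j) * b j).IsPositive

/-!
Write `c x = q x p` for the projection onto the corner cut out by two `T`-invariant projections.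
The sesquilinear form `T(x⋆ y) - T(x⋆) T(y)` is positive and vanishes at `(p, p)` and `(q, q)`, so
by Cauchy–Schwarz these projections lie in the multiplicative domain of `T`, and `c` commutes with
`T`. For commuting operators in finite dimension, a nonzero invariant functional forces a nonzero
common fixed vector: coinvariants and invariants of a module over a commutative Artinian ring
vanish together. If `x ↦ tr (σ q x p)` were nonzero, there would thus be a nonzero fixed point of
`T` equal to its own off-diagonal corner.
-/

section CommutingOperators

open Module
open scoped IsMulCommutative

lemma exists_ne_zero_forall_mem_smul_eq_zero {R M : Type*} [CommRing R] [IsArtinianRing R]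
    [AddCommGroup M] [Module R M] [Module.Finite R M] {I : Ideal R}
    (hI : I • (⊤ : Submodule R M) ≠ ⊤) : ∃ v : M, v ≠ 0 ∧ ∀ a ∈ I, a • v = 0 := by
  have hne : I ⊔ annihilator R M ≠ ⊤ := fun h ↦ hI <| by
    rw [← sup_bot_eq (I • ⊤), ← Submodule.annihilator_smul (⊤ : Submodule R M),
      Submodule.annihilator_top, ← Submodule.sup_smul, h, Submodule.top_smul]
  obtain ⟨P, hP, hle⟩ := Ideal.exists_le_maximal _ hne
  have hmin : P ∈ (annihilator R M).minimalPrimes :=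
    IsArtinianRing.mem_minimalPrimes (le_sup_right.trans hle)
  obtain ⟨-, v, rfl⟩ := Submodule.isAssociatedPrime_iff.1
    (associatedPrimes.minimalPrimes_annihilator_subset_associatedPrimes R M hmin)
  refine ⟨v, ?_, fun a ha ↦ Submodule.mem_colon_singleton.1 (le_sup_left.trans hle ha)⟩
  rintro rfl
  exact hP.ne_top (by simp)

variable {K M N : Type*} [Field K] [AddCommGroup M] [Module K M] [FiniteDimensional K M]
  [AddCommGroup N] [Module K N]

lemma exists_common_fixed_point_of_invariant {S : Set (End K M)}
    (hS : ∀ f ∈ S, ∀ g ∈ S, Commute f g) {φ : M →ₗ[K] N} (hφ : φ ≠ 0)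
    (hinv : ∀ f ∈ S, ∀ x, φ (f x) = φ x) : ∃ v ≠ 0, ∀ f ∈ S, f v = v := by
  have := Algebra.isMulCommutative_adjoin K hS
  let A := Algebra.adjoin K S
  have : IsArtinianRing A := IsArtinianRing.of_finite K A
  have : Module.Finite A M := Module.Finite.of_restrictScalars_finite K A M
  let I : Ideal A :=
    { carrier := {a | ∀ x : M, φ (a • x) = 0}
      add_mem' := fun ha hb x ↦ by rw [add_smul, map_add, ha x, hb x, add_zero]
      zero_mem' := fun x ↦ by rw [zero_smul, map_zero]
      smul_mem' := fun b a ha x ↦ by rw [smul_eq_mul, mul_comm, mul_smul, ha] }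
  have hker : ∀ x ∈ I • (⊤ : Submodule A M), φ x = 0 := fun x hx ↦
    Submodule.smul_induction_on hx (fun _ ha y _ ↦ ha y)
      fun _ _ h₁ h₂ ↦ by rw [map_add, h₁, h₂, add_zero]
  obtain ⟨v, hv, hIv⟩ := exists_ne_zero_forall_mem_smul_eq_zero (I := I) (M := M)
    fun h ↦ hφ <| LinearMap.ext fun x ↦ hker x (h.ge Submodule.mem_top)
  refine ⟨v, hv, fun f hf ↦ sub_eq_zero.1 ?_⟩
  exact hIv (⟨f, Algebra.subset_adjoin hf⟩ - 1) fun x ↦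
    (map_sub φ (f x) x).trans (sub_eq_zero.2 (hinv f hf x))

lemma exists_common_fixed_point_of_idempotent_of_invariant {S : Set (End K M)}
    (hS : ∀ f ∈ S, ∀ g ∈ S, Commute f g) {c : End K M} (hc : IsIdempotentElem c)
    (hcS : ∀ f ∈ S, Commute c f) {φ : M →ₗ[K] N} (hφ : φ ∘ₗ c ≠ 0)
    (hinv : ∀ f ∈ S, ∀ x, φ (f x) = φ x) : ∃ v ≠ 0, c v = v ∧ ∀ f ∈ S, f v = v := by
  have hcomm : ∀ f ∈ insert c S, ∀ g ∈ insert c S, Commute f g := by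
    rintro f (rfl | hf) g (rfl | hg)
    exacts [.refl _, hcS g hg, (hcS f hf).symm, hS f hf g hg]
  obtain ⟨v, hv, hfix⟩ := exists_common_fixed_point_of_invariant hcomm hφ <| by
    rintro f (rfl | hf) x
    · exact congr(φ ($hc x))
    · exact congr(φ ($(hcS f hf) x)).trans (hinv f hf (c x))
  exact ⟨v, hv, Set.forall_mem_insert.1 hfix⟩

end CommutingOperators

section SchwarzMap

lemma nonneg_of_forall_pos_add_smul_nonneg {F : Type*} [AddCommGroup F] [PartialOrder F]
    [TopologicalSpace F] [ContinuousAdd F] [ClosedIciTopology F] [Module ℝ F]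
    [ContinuousSMul ℝ F] {a b : F} (h : ∀ r : ℝ, 0 < r → 0 ≤ a + r • b) : 0 ≤ a := by
  have hlim : Tendsto (fun r : ℝ ↦ a + r • b) (nhdsWithin 0 (Set.Ioi 0)) (nhds a) := by
    have : Continuous fun r : ℝ ↦ a + r • b := by fun_prop
    simpa using (this.tendsto 0).mono_left nhdsWithin_le_nhds
  exact ge_of_tendsto hlim (eventually_mem_nhdsWithin.mono h)

lemma sesqForm_apply_eq_zero_of_apply_self_eq_zero {V F : Type*} [AddCommGroup V] [Module ℂ V]
    [AddCommGroup F] [PartialOrder F] [IsOrderedAddMonoid F] [TopologicalSpace F]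
    [ContinuousAdd F] [ClosedIciTopology F] [Module ℂ F] [ContinuousSMul ℝ F] [PosSMulMono ℝ F]
    {B : V →ₗ⋆[ℂ] V →ₗ[ℂ] F} (hB : ∀ x, 0 ≤ B x x) {x : V} (hx : B x x = 0) (y : V) :
    B x y = 0 ∧ B y x = 0 := by
  have hnonneg : ∀ y, 0 ≤ B x y + B y x := fun y ↦ by
    refine nonneg_of_forall_pos_add_smul_nonneg (b := B y y) fun r hr ↦ ?_
    have hexpand : B (x + (r : ℂ) • y) (x + (r : ℂ) • y) = r • (B x y + B y x + r • B y y) := by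
      simp only [← Complex.coe_smul r, map_add, map_smulₛₗ, LinearMap.add_apply,
        LinearMap.smul_apply, hx, RingHom.id_apply, Complex.conj_ofReal]
      module
    exact (smul_nonneg_iff_nonneg_of_pos_left hr).1 (hexpand ▸ hB (x + (r : ℂ) • y))
  have hsum : ∀ y, B x y + B y x = 0 := fun y ↦ by
    have hneg := hnonneg (-y)
    rw [map_neg, map_neg, LinearMap.neg_apply, ← neg_add, neg_nonneg] at hneg
    exact hneg.antisymm (hnonneg y)
  have hdiff : B x y - B y x = 0 := by
    have hI := hsum (Complex.I • y)
    rw [map_smul, map_smulₛₗ, LinearMap.smul_apply, Complex.conj_I, neg_smul, ← smul_neg,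
      ← smul_add, ← sub_eq_add_neg] at hI
    exact (smul_eq_zero_iff_right Complex.I_ne_zero).1 hI
  have hxy : B x y = B y x := sub_eq_zero.1 hdiff
  have hyx : B y x = 0 := by
    have htwo := hsum y
    rw [hxy, ← two_smul ℂ] at htwo
    exact (smul_eq_zero_iff_right two_ne_zero).1 htwo
  exact ⟨hxy.trans hyx, hyx⟩

/-- A linear map satisfying the operator Schwarz inequality `T(x)⋆ T(x) ≤ T(x⋆ x)`. The left-hand
side is written with `T (star x)`, which is `star (T x)` when `T` is positive, so that the defect
of the inequality is sesquilinear without knowing that `T` preserves adjoints. -/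
def IsSchwarzMap {A B : Type*} [NonUnitalNonAssocSemiring A] [Star A] [Module ℂ A]
    [NonUnitalNonAssocSemiring B] [Module ℂ B] [LE B] (T : A →ₗ[ℂ] B) : Prop :=
  ∀ x, T (star x) * T x ≤ T (star x * x)

section Multiplicative

variable {A B : Type*} [NonUnitalRing A] [StarRing A] [Module ℂ A] [StarModule ℂ A]
  [SMulCommClass ℂ A A] [IsScalarTower ℂ A A] [NonUnitalRing B] [Module ℂ B]
  [SMulCommClass ℂ B B] [IsScalarTower ℂ B B]

/-- The sesquilinear defect `T(x⋆ y) - T(x⋆) T(y)` of multiplicativity of a linear map, whose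
positivity on the diagonal is the operator Schwarz inequality. -/
def schwarzDefect (T : A →ₗ[ℂ] B) : A →ₗ⋆[ℂ] A →ₗ[ℂ] B :=
  LinearMap.mk₂'ₛₗ (starRingEnd ℂ) (RingHom.id ℂ) (fun x y ↦ T (star x * y) - T (star x) * T y)
    (fun x₁ x₂ y ↦ by simp only [star_add, add_mul, map_add]; abel)
    (fun c x y ↦ by simp [smul_sub, smul_mul_assoc])
    (fun x y₁ y₂ ↦ by simp only [mul_add, map_add]; abel)
    (fun c x y ↦ by simp [smul_sub, mul_smul_comm])

lemma schwarzDefect_apply (T : A →ₗ[ℂ] B) (x y : A) :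
    schwarzDefect T x y = T (star x * y) - T (star x) * T y := rfl

lemma schwarzDefect_self_eq_zero {T : A →ₗ[ℂ] B} {p : A} (hp : IsStarProjection p)
    (hTp : IsIdempotentElem (T p)) : schwarzDefect T p p = 0 := by
  rw [schwarzDefect_apply, hp.isSelfAdjoint.star_eq, hp.isIdempotentElem.eq, hTp.eq, sub_self]

namespace IsSchwarzMap

variable [PartialOrder B] [IsOrderedAddMonoid B] {T : A →ₗ[ℂ] B} {p : A}

lemma schwarzDefect_nonneg (hT : IsSchwarzMap T) (x : A) : 0 ≤ schwarzDefect T x x :=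
  sub_nonneg.2 (hT x)

variable [TopologicalSpace B] [ContinuousAdd B] [ClosedIciTopology B] [ContinuousSMul ℝ B]
  [PosSMulMono ℝ B]

lemma map_isStarProjection_mul (hT : IsSchwarzMap T) (hp : IsStarProjection p)
    (hTp : IsIdempotentElem (T p)) (x : A) : T (p * x) = T p * T x := by
  have h := (sesqForm_apply_eq_zero_of_apply_self_eq_zero hT.schwarzDefect_nonneg
    (schwarzDefect_self_eq_zero hp hTp) x).1
  rwa [schwarzDefect_apply, hp.isSelfAdjoint.star_eq, sub_eq_zero] at h

lemma map_mul_isStarProjection (hT : IsSchwarzMap T) (hp : IsStarProjection p)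
    (hTp : IsIdempotentElem (T p)) (x : A) : T (x * p) = T x * T p := by
  have h := (sesqForm_apply_eq_zero_of_apply_self_eq_zero hT.schwarzDefect_nonneg
    (schwarzDefect_self_eq_zero hp hTp) (star x)).2
  rwa [schwarzDefect_apply, star_star, sub_eq_zero] at h

end IsSchwarzMap

end Multiplicative

lemma IsCompletelyPositiveE.isSchwarzMap {d : ℕ}
    {T : (EuclideanSpace ℂ (Fin d) →L[ℂ] EuclideanSpace ℂ (Fin d)) →ₗ[ℂ]
      (EuclideanSpace ℂ (Fin d) →L[ℂ] EuclideanSpace ℂ (Fin d))}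
    (hT : IsCompletelyPositiveE d T) (hT1 : T 1 = 1) : IsSchwarzMap T := fun x ↦ by
  have hpos := hT 2 ![1, x] ![-T x, 1]
  have hstar : star (-T x) = -star (T x) := map_neg ContinuousLinearMap.adjoint (T x)
  simp only [Fin.sum_univ_two, Matrix.cons_val_zero, Matrix.cons_val_one, star_one, one_mul,
    mul_one, hT1, hstar] at hpos
  rw [mul_neg (T (star x)) (T x), neg_mul_neg (star (T x)) (T x), neg_mul (star (T x)) (T x),
    add_neg_cancel, zero_add, neg_add_eq_sub] at hpos
  exact (ContinuousLinearMap.le_def _ _).2 hpos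

end SchwarzMap

section InvariantFunctional

lemma map_corner_eq_zero_of_invariant {A N κ : Type*} [NonUnitalCStarAlgebra A] [PartialOrder A]
    [StarOrderedRing A] [FiniteDimensional ℂ A] [AddCommGroup N] [Module ℂ N]
    {T : κ → Module.End ℂ A} (hT : ∀ k, IsSchwarzMap (T k)) (hcomm : ∀ k l, Commute (T k) (T l))
    {p q : A} (hp : IsStarProjection p) (hq : IsStarProjection q)
    (hTp : ∀ k, T k p = p) (hTq : ∀ k, T k q = q)
    (hF : ∀ x, (∀ k, T k x = x) → q * x * p = 0)
    {φ : A →ₗ[ℂ] N} (hφ : ∀ k x, φ (T k x) = φ x) (x : A) : φ (q * x * p) = 0 := by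
  let c : Module.End ℂ A := LinearMap.mulRight ℂ p ∘ₗ LinearMap.mulLeft ℂ q
  have hc : IsIdempotentElem c := LinearMap.ext fun x ↦ by
    simp [c, mul_assoc, hp.isIdempotentElem.eq, ← mul_assoc q q, hq.isIdempotentElem.eq]
  have hcT : ∀ k, Commute c (T k) := fun k ↦ LinearMap.ext fun x ↦ by
    have hTp' : IsIdempotentElem (T k p) := (hTp k).symm ▸ hp.isIdempotentElem
    have hTq' : IsIdempotentElem (T k q) := (hTq k).symm ▸ hq.isIdempotentElem
    change q * T k x * p = T k (q * x * p)
    rw [(hT k).map_mul_isStarProjection hp hTp', (hT k).map_isStarProjection_mul hq hTq', hTp, hTq]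
  by_contra hne
  obtain ⟨v, hv, hcv, hTv⟩ := exists_common_fixed_point_of_idempotent_of_invariant
    (S := Set.range T) (φ := φ) (by simpa using hcomm) hc (by simpa using hcT)
    (fun h ↦ hne congr($h x)) (by simpa using hφ)
  exact hv (hcv.symm.trans (hF v (by simpa using hTv)))

lemma eq_zero_of_forall_trace_mul_eq_zero {𝕜 H : Type*} [RCLike 𝕜] [NormedAddCommGroup H]
    [InnerProductSpace 𝕜 H] [FiniteDimensional 𝕜 H] {a : H →L[𝕜] H}
    (h : ∀ x : H →L[𝕜] H, LinearMap.trace 𝕜 H ↑(a * x) = 0) : a = 0 := by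
  ext1 v
  have hv := h (InnerProductSpace.rankOne 𝕜 v (a v))
  rw [ContinuousLinearMap.mul_def, InnerProductSpace.comp_rankOne,
    InnerProductSpace.trace_rankOne] at hv
  exact inner_self_eq_zero.1 hv

theorem off_diagonal_blocks_of_invariant_state_vanish_general {H κ : Type*}
    [NormedAddCommGroup H] [InnerProductSpace ℂ H] [FiniteDimensional ℂ H] [CompleteSpace H]
    {T : κ → Module.End ℂ (H →L[ℂ] H)} (hT : ∀ k, IsSchwarzMap (T k))
    (hcomm : ∀ k l, Commute (T k) (T l)) {p q : H →L[ℂ] H} (hp : IsStarProjection p)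
    (hq : IsStarProjection q) (hTp : ∀ k, T k p = p) (hTq : ∀ k, T k q = q)
    (hF : ∀ x, (∀ k, T k x = x) → q * x * p = 0) {σ : H →L[ℂ] H}
    (hσ : ∀ k x, LinearMap.trace ℂ H ↑(σ * T k x) = LinearMap.trace ℂ H ↑(σ * x)) :
    p * σ * q = 0 := by
  let φ : (H →L[ℂ] H) →ₗ[ℂ] ℂ :=
    LinearMap.trace ℂ H ∘ₗ ContinuousLinearMap.coeLM ℂ ∘ₗ LinearMap.mulLeft ℂ σ
  refine eq_zero_of_forall_trace_mul_eq_zero fun x ↦ ?_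
  calc LinearMap.trace ℂ H ↑(p * σ * q * x)
      = LinearMap.trace ℂ H ↑(p * (σ * q * x)) := by simp only [mul_assoc]
    _ = LinearMap.trace ℂ H ↑(σ * q * x * p) := LinearMap.trace_mul_comm ℂ _ _
    _ = φ (q * x * p) := by simp only [mul_assoc]; rfl
    _ = 0 := map_corner_eq_zero_of_invariant hT hcomm hp hq hTp hTq hF (φ := φ) hσ x

end InvariantFunctional

lemma mul_mul_eq_zero_of_eq_sum {R ι : Type*} [NonUnitalSemiring R] [Fintype ι] {p : ι → R}
    (horth : ∀ i j, i ≠ j → p i * p j = 0) {x : R} (hx : x = ∑ k, p k * x * p k) {i j : ι}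
    (hij : i ≠ j) : p i * x * p j = 0 := by
  rw [hx, Finset.mul_sum, Finset.sum_mul]
  refine Finset.sum_eq_zero fun k _ ↦ ?_
  rcases eq_or_ne i k with rfl | hik
  · rw [mul_assoc, mul_assoc _ (p i), horth i j hij, mul_zero, mul_zero]
  · rw [← mul_assoc, ← mul_assoc, horth i k hik, zero_mul, zero_mul, zero_mul]

/-- if the minimal central projections `pᵢ` of the atomic algebra
`N(T)` are fixed by `T`, the fixed point algebra satisfies
`F(T) ⊆ ⊕ᵢ pᵢ B(H) pᵢ`, and the Cesàro means of `T` converge to a map `E` with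
range in `F(T)`, then every `T`-invariant state `σ` satisfies `pᵢ σ pⱼ = 0`
for `i ≠ j`. -/
theorem off_diagonal_blocks_of_invariant_state_vanish
    (d : ℕ) (ι : Type) [Fintype ι]
    (T : ℝ → (EuclideanSpace ℂ (Fin d) →L[ℂ] EuclideanSpace ℂ (Fin d)) →ₗ[ℂ]
      (EuclideanSpace ℂ (Fin d) →L[ℂ] EuclideanSpace ℂ (Fin d)))
    (hCP : ∀ t, 0 ≤ t → IsCompletelyPositiveE d (T t))
    (hunital : ∀ t, 0 ≤ t → T t 1 = 1)
    (hzero : T 0 = LinearMap.id)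
    (hsemi : ∀ t s, 0 ≤ t → 0 ≤ s → ∀ x, T (t + s) x = T t (T s x))
    -- the mutually orthogonal projections `pᵢ`, summing to `1`, fixed by `T`
    (p : ι → (EuclideanSpace ℂ (Fin d) →L[ℂ] EuclideanSpace ℂ (Fin d)))
    (hproj : ∀ i, IsSelfAdjoint (p i) ∧ p i * p i = p i)
    (horth : ∀ i j, i ≠ j → p i * p j = 0)
    (hsum : ∑ i, p i = 1)
    (hfix : ∀ i, ∀ t, 0 ≤ t → T t (p i) = p i)
    -- `F(T) ⊆ ⊕ᵢ pᵢ B(H) pᵢ`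
    (hF : ∀ x, (∀ t, 0 ≤ t → T t x = x) → x = ∑ i, p i * x * p i)
    -- the ergodic (Cesàro) projection `E` onto `F(T)`
    (E : (EuclideanSpace ℂ (Fin d) →L[ℂ] EuclideanSpace ℂ (Fin d)) →ₗ[ℂ]
      (EuclideanSpace ℂ (Fin d) →L[ℂ] EuclideanSpace ℂ (Fin d)))
    (hEfix : ∀ x, ∀ t, 0 ≤ t → T t (E x) = E x)
    (hEces : ∀ x, Tendsto (fun t : ℝ => (t : ℂ)⁻¹ • ∫ s in (0:ℝ)..t, T s x)
      atTop (nhds (E x)))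
    -- a `T`-invariant state `σ`
    (σ : EuclideanSpace ℂ (Fin d) →L[ℂ] EuclideanSpace ℂ (Fin d))
    (hσpos : σ.IsPositive) (hσtr : trE d σ = 1)
    (hσinv : ∀ t, 0 ≤ t → ∀ x, trE d (σ * T t x) = trE d (σ * x)) :
    ∀ i j, i ≠ j → p i * σ * p j = 0 := by
  intro i j hij
  refine off_diagonal_blocks_of_invariant_state_vanish_general (κ := NNReal) (T := fun t ↦ T t)
    (fun t ↦ (hCP t t.2).isSchwarzMap (hunital t t.2)) (fun t s ↦ LinearMap.ext fun x ↦ ?_)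
    ⟨(hproj i).2, (hproj i).1⟩ ⟨(hproj j).2, (hproj j).1⟩ (fun t ↦ hfix i t t.2)
    (fun t ↦ hfix j t t.2) (fun x hx ↦ ?_) (fun t ↦ hσinv t t.2)
  · exact (hsemi t s t.2 s.2 x).symm.trans (add_comm (t : ℝ) s ▸ hsemi s t s.2 t.2 x)
  · exact mul_mul_eq_zero_of_eq_sum horth (hF x fun t ht ↦ hx ⟨t, ht⟩) hij.symm
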